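/- Let t ≥ 2 and let T be an order-t real tensor. Then the sign nuclear norm and max-quasinorm satisfy ‖T‖_± ≤ K_G^{t−1}·‖T‖_max, where K_G ≤ 1.783 is Grothendieck's constant over ℝ; in particular ‖T‖_± ≤ 1.783^{t−1}·‖T‖_max. -/

import Mathlib

open Classical

/-- `‖U‖_{2,∞}`: the maximum ℓ2-norm of a row of `U`. -/
noncomputable def rowTwoInf {α : Type*} {r : ℕ} (U : α → Fin r → ℝ) : ℝ :=
  ⨆ a : α, Real.sqrt (∑ l, (U a l) ^ 2)

/-- The max-quasinorm of an order-`t` tensor. -/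
noncomputable def maxQnorm {t : ℕ} {n : Fin t → ℕ}
    (T : ((i : Fin t) → Fin (n i)) → ℝ) : ℝ :=
  sInf { c : ℝ | ∃ (r : ℕ) (U : (i : Fin t) → Fin (n i) → Fin r → ℝ),
    (∀ x, T x = ∑ l : Fin r, ∏ i, U i (x i) l) ∧ c = ∏ i, rowTwoInf (U i) }

/-- The sign nuclear norm (atomic M-norm): the infimum of `∑ |αⱼ|` over all
decompositions `T = ∑ⱼ αⱼ Sⱼ` into rank-one sign tensors
`Sⱼ = s_{j,1} ∘ ⋯ ∘ s_{j,t}` with `s_{j,i} ∈ {±1}^{nᵢ}`. -/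
noncomputable def signNuclearNorm {t : ℕ} {n : Fin t → ℕ}
    (T : ((i : Fin t) → Fin (n i)) → ℝ) : ℝ :=
  sInf { c : ℝ | ∃ (r : ℕ) (a : Fin r → ℝ) (s : Fin r → (i : Fin t) → Fin (n i) → ℝ),
    (∀ j i x, s j i x = 1 ∨ s j i x = -1) ∧
    (∀ x, T x = ∑ j, a j * ∏ i, s j i (x i)) ∧ c = ∑ j, |a j| }

open MeasureTheory ProbabilityTheory

/-- The `±1`-valued sign of a real number, with value `1` at `0`. -/
noncomputable def unitSign (x : ℝ) : ℝ := if 0 ≤ x then 1 else -1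

lemma unitSign_eq_or (x : ℝ) : unitSign x = 1 ∨ unitSign x = -1 := by
  unfold unitSign; split_ifs <;> simp

lemma unitSign_of_nonneg {x : ℝ} (hx : 0 ≤ x) : unitSign x = 1 := if_pos hx

lemma unitSign_of_neg {x : ℝ} (hx : x < 0) : unitSign x = -1 := if_neg hx.not_ge

lemma abs_unitSign (x : ℝ) : |unitSign x| = 1 := by
  rcases unitSign_eq_or x with h | h <;> simp [h]

lemma unitSign_mul_self (x : ℝ) : unitSign x * x = |x| := by
  rcases le_or_gt 0 x with h | h
  · rw [unitSign_of_nonneg h, abs_of_nonneg h, one_mul]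
  · rw [unitSign_of_neg h, abs_of_neg h, neg_one_mul]

lemma unitSign_pos_mul {r : ℝ} (hr : 0 < r) (x : ℝ) : unitSign (r * x) = unitSign x := by
  unfold unitSign; simp only [mul_nonneg_iff_of_pos_left hr]

@[fun_prop]
lemma measurable_unitSign : Measurable unitSign :=
  Measurable.ite measurableSet_Ici measurable_const measurable_const

lemma intervalIntegrable_unitSign_comp {f : ℝ → ℝ} (hf : Measurable f) (a b : ℝ) :
    IntervalIntegrable (fun x => unitSign (f x)) volume a b := by
  refine (intervalIntegrable_const (c := (1 : ℝ))).mono_fun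
    (Measurable.aestronglyMeasurable (by fun_prop)) (Filter.Eventually.of_forall fun x => ?_)
  simp [abs_unitSign]

lemma integral_unitSign_sin_Icc_neg {a : ℝ} (ha : a ∈ Set.Icc (-(Real.pi / 2)) (Real.pi / 2)) :
    ∫ x in (-(Real.pi / 2) + a)..(Real.pi / 2 + a), unitSign (Real.sin x) = 2 * a := by
  have hi := intervalIntegrable_unitSign_comp Real.measurable_sin
  have hpi := Real.pi_pos
  rw [← intervalIntegral.integral_add_adjacent_intervals (hi _ 0) (hi 0 _)]
  have hn : ∫ x in (-(Real.pi / 2) + a)..0, unitSign (Real.sin x)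
      = ∫ x in (-(Real.pi / 2) + a)..0, (-1 : ℝ) := by
    refine intervalIntegral.integral_congr_uIoo fun x hx => ?_
    rw [Set.uIoo_of_le (by linarith [ha.2])] at hx
    exact unitSign_of_neg (Real.sin_neg_of_neg_of_neg_pi_lt hx.2 (by linarith [hx.1, ha.1]))
  have hp : ∫ x in 0..(Real.pi / 2 + a), unitSign (Real.sin x)
      = ∫ x in 0..(Real.pi / 2 + a), (1 : ℝ) := by
    refine intervalIntegral.integral_congr_uIoo fun x hx => ?_
    rw [Set.uIoo_of_le (by linarith [ha.1])] at hx
    exact unitSign_of_nonneg (Real.sin_nonneg_of_nonneg_of_le_pi hx.1.le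
      (by linarith [hx.2, ha.2]))
  rw [hn, hp]
  simp
  ring

lemma integral_unitSign_sin_Icc_pi {a : ℝ} (ha : a ∈ Set.Icc (-(Real.pi / 2)) (Real.pi / 2)) :
    ∫ x in (Real.pi / 2 + a)..(3 * Real.pi / 2 + a), unitSign (Real.sin x) = -(2 * a) := by
  have hi := intervalIntegrable_unitSign_comp Real.measurable_sin
  have hpi := Real.pi_pos
  rw [← intervalIntegral.integral_add_adjacent_intervals (hi _ Real.pi) (hi Real.pi _)]
  have hp : ∫ x in (Real.pi / 2 + a)..Real.pi, unitSign (Real.sin x)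
      = ∫ x in (Real.pi / 2 + a)..Real.pi, (1 : ℝ) := by
    refine intervalIntegral.integral_congr_uIoo fun x hx => ?_
    rw [Set.uIoo_of_le (by linarith [ha.2])] at hx
    exact unitSign_of_nonneg (Real.sin_nonneg_of_nonneg_of_le_pi (by linarith [hx.1, ha.1])
      hx.2.le)
  have hn : ∫ x in Real.pi..(3 * Real.pi / 2 + a), unitSign (Real.sin x)
      = ∫ x in Real.pi..(3 * Real.pi / 2 + a), (-1 : ℝ) := by
    refine intervalIntegral.integral_congr_uIoo fun x hx => ?_
    rw [Set.uIoo_of_le (by linarith [ha.1])] at hx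
    refine unitSign_of_neg ?_
    rw [← Real.sin_sub_two_pi]
    exact Real.sin_neg_of_neg_of_neg_pi_lt (by linarith [hx.2, ha.2]) (by linarith [hx.1])
  rw [hn, hp]
  simp
  ring

lemma integral_unitSign_cos_mul_unitSign_sin_add {a : ℝ}
    (ha : a ∈ Set.Icc (-(Real.pi / 2)) (Real.pi / 2)) :
    ∫ x in (-Real.pi)..Real.pi, unitSign (Real.cos x) * unitSign (Real.sin (x + a)) = 4 * a := by
  have hpi := Real.pi_pos
  set f : ℝ → ℝ := fun x => unitSign (Real.cos x) * unitSign (Real.sin (x + a)) with hf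
  have hper : Function.Periodic f (2 * Real.pi) := fun x => by
    simp only [hf, Real.cos_add_two_pi, add_right_comm x (2 * Real.pi) a, Real.sin_add_two_pi]
  have hshift := hper.intervalIntegral_add_eq (-Real.pi) (-(Real.pi / 2))
  rw [show -Real.pi + 2 * Real.pi = Real.pi by ring,
    show -(Real.pi / 2) + 2 * Real.pi = 3 * Real.pi / 2 by ring] at hshift
  have hi : ∀ b c, IntervalIntegrable f volume b c := fun b c => by
    refine (intervalIntegrable_const (c := (1 : ℝ))).mono_fun
      (Measurable.aestronglyMeasurable (by fun_prop)) (Filter.Eventually.of_forall fun x => ?_)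
    simp [hf, abs_unitSign]
  rw [hshift, ← intervalIntegral.integral_add_adjacent_intervals (hi _ (Real.pi / 2)) (hi _ _)]
  have hl : ∫ x in (-(Real.pi / 2))..(Real.pi / 2), f x
      = ∫ x in (-(Real.pi / 2))..(Real.pi / 2), unitSign (Real.sin (x + a)) := by
    refine intervalIntegral.integral_congr_uIoo fun x hx => ?_
    rw [Set.uIoo_of_le (by linarith)] at hx
    simp only [hf, unitSign_of_nonneg (Real.cos_pos_of_mem_Ioo hx).le, one_mul]
  have hr : ∫ x in (Real.pi / 2)..(3 * Real.pi / 2), f x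
      = ∫ x in (Real.pi / 2)..(3 * Real.pi / 2), -unitSign (Real.sin (x + a)) := by
    refine intervalIntegral.integral_congr_uIoo fun x hx => ?_
    rw [Set.uIoo_of_le (by linarith)] at hx
    simp only [hf, unitSign_of_neg (Real.cos_neg_of_pi_div_two_lt_of_lt hx.1
      (by linarith [hx.2])), neg_one_mul]
  rw [hl, hr, intervalIntegral.integral_neg,
    intervalIntegral.integral_comp_add_right (fun x => unitSign (Real.sin x)),
    intervalIntegral.integral_comp_add_right (fun x => unitSign (Real.sin x)),
    integral_unitSign_sin_Icc_neg ha, integral_unitSign_sin_Icc_pi ha]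
  ring

lemma integral_Ioi_mul_exp_neg_sq_div_two :
    ∫ r in Set.Ioi (0 : ℝ), r * Real.exp (-(r ^ 2 / 2)) = 1 := by
  have h := integral_rpow_mul_exp_neg_mul_rpow (p := 2) (q := 1) (b := 1 / 2)
    (by norm_num) (by norm_num) (by norm_num)
  norm_num [Real.rpow_neg_one] at h
  rw [← h]
  refine setIntegral_congr_fun measurableSet_Ioi fun r _ => ?_
  ring_nf

/-- Grothendieck's identity for a standard Gaussian pair, written in terms of the angle. -/
lemma integral_gaussian_unitSign_mul_unitSign {a : ℝ}
    (ha : a ∈ Set.Icc (-(Real.pi / 2)) (Real.pi / 2)) :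
    ∫ p : ℝ × ℝ, unitSign p.1 * unitSign (Real.sin a * p.1 + Real.cos a * p.2)
      ∂((gaussianReal 0 1).prod (gaussianReal 0 1)) = 2 / Real.pi * a := by
  have hpi := Real.pi_pos
  rw [gaussianReal_of_var_ne_zero _ one_ne_zero,
    prod_withDensity (measurable_gaussianPDF _ _) (measurable_gaussianPDF _ _),
    integral_withDensity_eq_integral_toReal_smul (by fun_prop)
      (Filter.Eventually.of_forall fun x => ENNReal.mul_lt_top gaussianPDF_lt_top
        gaussianPDF_lt_top), ← Measure.volume_eq_prod, ← integral_comp_polarCoord_symm,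
    polarCoord_target]
  have hcongr : ∀ p ∈ Set.Ioi (0 : ℝ) ×ˢ Set.Ioo (-Real.pi) Real.pi,
      p.1 • (fun z : ℝ × ℝ => (gaussianPDF 0 1 z.1 * gaussianPDF 0 1 z.2).toReal •
        (unitSign z.1 * unitSign (Real.sin a * z.1 + Real.cos a * z.2))) (polarCoord.symm p)
      = (2 * Real.pi)⁻¹ * (p.1 * Real.exp (-(p.1 ^ 2 / 2))) *
        (unitSign (Real.cos p.2) * unitSign (Real.sin (p.2 + a))) := by
    rintro ⟨r, x⟩ ⟨hr, -⟩
    have hr : 0 < r := hr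
    simp only [polarCoord_symm_apply, ENNReal.toReal_mul, toReal_gaussianPDF, gaussianPDFReal_def,
      smul_eq_mul]
    rw [show Real.sin a * (r * Real.cos x) + Real.cos a * (r * Real.sin x)
      = r * Real.sin (x + a) by rw [Real.sin_add]; ring, unitSign_pos_mul hr, unitSign_pos_mul hr]
    have hexp : Real.exp (-(r ^ 2 / 2)) = Real.exp (-(r * Real.cos x - 0) ^ 2 / (2 * (1 : NNReal)))
        * Real.exp (-(r * Real.sin x - 0) ^ 2 / (2 * (1 : NNReal))) := by
      rw [← Real.exp_add]
      congr 1
      have := Real.sin_sq_add_cos_sq x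
      simp
      linear_combination (r ^ 2 / 2) * this
    have hsq : (2 * Real.pi)⁻¹ = (√(2 * Real.pi * (1 : NNReal)))⁻¹
        * (√(2 * Real.pi * (1 : NNReal)))⁻¹ := by
      rw [← mul_inv, Real.mul_self_sqrt (by positivity)]
      simp
    rw [hexp, hsq]
    ring
  rw [setIntegral_congr_fun (measurableSet_Ioi.prod measurableSet_Ioo) hcongr,
    Measure.volume_eq_prod, setIntegral_prod_mul (fun r => (2 * Real.pi)⁻¹ *
      (r * Real.exp (-(r ^ 2 / 2)))) (fun x => unitSign (Real.cos x) * unitSign (Real.sin (x + a))),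
    integral_const_mul, integral_Ioi_mul_exp_neg_sq_div_two, ← integral_Ioc_eq_integral_Ioo,
    ← intervalIntegral.integral_of_le (by linarith),
    integral_unitSign_cos_mul_unitSign_sin_add ha]
  field_simp
  ring

/-- Grothendieck's identity for two coordinates of a Gaussian vector. -/
lemma integral_multivariateGaussian_unitSign_mul_unitSign {ι : Type*} [Fintype ι]
    {S : Matrix ι ι ℝ} (hS : S.PosSemidef) {i j : ι} (hi : S i i = 1) (hj : S j j = 1) {a : ℝ}
    (ha : a ∈ Set.Ioo (-(Real.pi / 2)) (Real.pi / 2)) (hij : S i j = Real.sin a) :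
    ∫ x, unitSign (x i) * unitSign (x j) ∂(multivariateGaussian 0 S) = 2 / Real.pi * a := by
  have hc : 0 < Real.cos a := Real.cos_pos_of_mem_Ioo ha
  set P := multivariateGaussian (0 : EuclideanSpace ℝ ι) S
  let X : EuclideanSpace ℝ ι →L[ℝ] ℝ := EuclideanSpace.proj i
  let Y : EuclideanSpace ℝ ι →L[ℝ] ℝ := EuclideanSpace.proj j
  let Z : EuclideanSpace ℝ ι →L[ℝ] ℝ := (Real.cos a)⁻¹ • (Y - Real.sin a • X)
  have hlp : ∀ L : EuclideanSpace ℝ ι →L[ℝ] ℝ, MemLp L 2 P := fun L =>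
    (IsGaussian.hasGaussianLaw_id.map (P := P) L).memLp_two
  have hXX : cov[X, X; P] = 1 := (covariance_eval_multivariateGaussian hS i i).trans hi
  have hYY : cov[Y, Y; P] = 1 := (covariance_eval_multivariateGaussian hS j j).trans hj
  have hXY : cov[X, Y; P] = Real.sin a := (covariance_eval_multivariateGaussian hS i j).trans hij
  have hW : ∀ L : EuclideanSpace ℝ ι →L[ℝ] ℝ,
      cov[L, Z; P] = (Real.cos a)⁻¹ * (cov[L, Y; P] - Real.sin a * cov[L, X; P]) := fun L => by
    rw [show ⇑Z = (Real.cos a)⁻¹ • (⇑Y - Real.sin a • ⇑X) from rfl, covariance_smul_right,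
      covariance_sub_right (hlp L) (hlp Y) ((hlp X).const_smul _), covariance_smul_right]
  have hXZ : cov[X, Z; P] = 0 := by rw [hW, hXY, hXX]; ring
  have hZZ : cov[Z, Z; P] = 1 := by
    rw [hW, covariance_comm, hW, covariance_comm Z X, hXZ, hYY, covariance_comm, hXY]
    have := Real.sin_sq_add_cos_sq a
    field_simp
    linarith
  have hmean : ∀ L : EuclideanSpace ℝ ι →L[ℝ] ℝ, ∫ x, L x ∂P = 0 := fun L => by
    have := L.integral_comp_id_comm (μ := P) IsGaussian.integrable_id
    rw [this]
    simp [P]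
  have hlaw : ∀ L : EuclideanSpace ℝ ι →L[ℝ] ℝ, cov[L, L; P] = 1 →
      P.map L = gaussianReal 0 1 := fun L hL => by
    rw [IsGaussian.map_eq_gaussianReal, hmean, ← covariance_self (by fun_prop), hL,
      Real.toNNReal_one]
  have hind : IndepFun X Z P := HasGaussianLaw.indepFun_of_covariance_eq_zero
    (IsGaussian.hasGaussianLaw_id.map (P := P) (X.prod Z)) hXZ
  rw [indepFun_iff_map_prod_eq_prod_map_map (by fun_prop) (by fun_prop), hlaw X hXX,
    hlaw Z hZZ] at hind
  rw [← integral_gaussian_unitSign_mul_unitSign (Set.Ioo_subset_Icc_self ha), ← hind,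
    integral_map (by fun_prop) (Measurable.aestronglyMeasurable (by fun_prop))]
  refine integral_congr_ae (Filter.Eventually.of_forall fun x => ?_)
  have : Real.sin a * X x + Real.cos a * Z x = x j := by
    simp [X, Y, Z]
    field_simp
    ring
  simp only [this]
  rfl

lemma Matrix.PosSemidef.map_pow {ι : Type*} [Finite ι] {P : Matrix ι ι ℝ} (hP : P.PosSemidef)
    (m : ℕ) : (Matrix.of fun p q => P p q ^ m).PosSemidef := by
  induction m with
  | zero =>
    convert Matrix.posSemidef_vecMulVec_self_star (fun _ : ι => (1 : ℝ)) using 1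
    ext p q
    simp [Matrix.vecMulVec]
  | succ m ih =>
    have h : (Matrix.of fun p q => P p q ^ (m + 1))
        = (Matrix.of fun p q => P p q ^ m).hadamard P := by
      ext p q
      simp [pow_succ]
    rw [h]
    exact ih.hadamard hP

lemma Matrix.PosSemidef.of_hasSum {ι : Type*} [Fintype ι] {Q : ℕ → Matrix ι ι ℝ}
    {G : Matrix ι ι ℝ} (hQ : ∀ k, (Q k).PosSemidef)
    (hG : ∀ p q, HasSum (fun k => Q k p q) (G p q)) : G.PosSemidef := by
  refine Matrix.PosSemidef.of_dotProduct_mulVec_nonneg ?_ fun z => ?_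
  · ext p q
    refine (hG q p).unique ?_
    convert hG p q using 2 with k
    exact (hQ k).1.apply p q
  · have hsum : HasSum (fun k => star z ⬝ᵥ (Q k).mulVec z) (star z ⬝ᵥ G.mulVec z) := by
      simp only [dotProduct, Matrix.mulVec]
      exact hasSum_sum fun p _ => (hasSum_sum fun q _ => (hG p q).mul_right _).mul_left _
    exact hsum.nonneg fun k => (hQ k).dotProduct_mulVec_nonneg z

/-- Krivine's kernel: `sinh` of the Gram matrix on the diagonal blocks and `sin` of it on the
off-diagonal blocks. -/
noncomputable def krivineKernel {α β : Type*} (P : Matrix (α ⊕ β) (α ⊕ β) ℝ) :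
    Matrix (α ⊕ β) (α ⊕ β) ℝ :=
  Matrix.of fun p q => if p.isLeft = q.isLeft then Real.sinh (P p q) else Real.sin (P p q)

lemma posSemidef_krivineKernel {α β : Type*} [Fintype α] [Fintype β]
    {P : Matrix (α ⊕ β) (α ⊕ β) ℝ} (hP : P.PosSemidef) : (krivineKernel P).PosSemidef := by
  let e : ℕ → α ⊕ β → ℝ := fun k => Sum.elim (fun _ => 1) (fun _ => (-1) ^ k)
  refine Matrix.PosSemidef.of_hasSum (Q := fun k => ((2 * k + 1).factorial : ℝ)⁻¹ •
    ((Matrix.of fun p q => P p q ^ (2 * k + 1)).hadamard (Matrix.vecMulVec (e k) (star (e k)))))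
    (fun k => ((hP.map_pow _).hadamard (Matrix.posSemidef_vecMulVec_self_star _)).smul
      (by positivity)) fun p q => ?_
  have hsq : ∀ k : ℕ, ((-1 : ℝ) ^ k) * (-1) ^ k = 1 := fun k => by
    rw [← mul_pow]; simp
  rcases p with p | p <;> rcases q with q | q
  · convert Real.hasSum_sinh (P (Sum.inl p) (Sum.inl q)) using 2 with k
    · simp [Matrix.vecMulVec, e]; ring
    · simp [krivineKernel]
  · convert Real.hasSum_sin (P (Sum.inl p) (Sum.inr q)) using 2 with k
    · simp [Matrix.vecMulVec, e]; ring
    · simp [krivineKernel]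
  · convert Real.hasSum_sin (P (Sum.inr p) (Sum.inl q)) using 2 with k
    · simp [Matrix.vecMulVec, e]; ring
    · simp [krivineKernel]
  · convert Real.hasSum_sinh (P (Sum.inr p) (Sum.inr q)) using 2 with k
    · simp [Matrix.vecMulVec, e, hsq]; ring
    · simp [krivineKernel]

lemma posSemidef_gram {ι : Type*} [Fintype ι] {r : ℕ} (w : ι → Fin r → ℝ) :
    (Matrix.of fun p q => ∑ l, w p l * w q l).PosSemidef := by
  convert Matrix.posSemidef_self_mul_conjTranspose (Matrix.of w) using 1
  ext p q
  simp [Matrix.mul_apply]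

lemma sinh_le_one_of_le {x : ℝ} (hx : x ≤ 0.881) : Real.sinh x ≤ 1 := by
  refine (Real.sinh_le_sinh.2 hx).trans ?_
  have h1 : Real.exp 0.881 ≤ 2.4142 := by
    refine (Real.exp_bound' (by norm_num) (by norm_num) (n := 8) (by norm_num)).trans ?_
    norm_num [Finset.sum_range_succ, Nat.factorial]
  have h2 : (2.4142 : ℝ)⁻¹ ≤ Real.exp (-0.881) := by
    rw [Real.exp_neg]
    exact inv_anti₀ (Real.exp_pos _) h1
  rw [Real.sinh_eq]
  norm_num at *
  linarith

lemma exists_posSemidef_sin_gram {α β : Type*} [Fintype α] [Fintype β] {r : ℕ}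
    (u : α → Fin r → ℝ) (v : β → Fin r → ℝ) (hu : ∀ a, ∑ l, u a l ^ 2 ≤ 1)
    (hv : ∀ b, ∑ l, v b l ^ 2 ≤ 1) :
    ∃ S : Matrix (α ⊕ β) (α ⊕ β) ℝ, S.PosSemidef ∧ (∀ p, S p p = 1) ∧
      ∀ a b, S (.inl a) (.inr b) = Real.sin (0.881 * ∑ l, u a l * v b l) := by
  let P : Matrix (α ⊕ β) (α ⊕ β) ℝ :=
    (0.881 : ℝ) • Matrix.of fun p q => ∑ l, Sum.elim u v p l * Sum.elim u v q l
  have hP : P.PosSemidef := (posSemidef_gram _).smul (by norm_num)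
  have hdiag : ∀ p, P p p ≤ 0.881 := by
    have key : ∀ s : ℝ, s ≤ 1 → 0.881 * s ≤ 0.881 := fun s hs => by linarith
    rintro (a | b)
    · simpa [P, ← sq] using key _ (hu a)
    · simpa [P, ← sq] using key _ (hv b)
  refine ⟨krivineKernel P + Matrix.diagonal fun p => 1 - Real.sinh (P p p),
    (posSemidef_krivineKernel hP).add (Matrix.PosSemidef.diagonal fun p => ?_),
    fun p => ?_, fun a b => ?_⟩
  · simpa using sinh_le_one_of_le (hdiag p)
  · simp [krivineKernel]
  · simp [krivineKernel, P]

/-- Grothendieck's inequality with Krivine's constant, for vectors in the unit ball. -/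
lemma grothendieck_inequality_unit {α β : Type*} [Fintype α] [Fintype β] {r : ℕ}
    (A : α → β → ℝ) {M : ℝ}
    (hA : ∀ (s : α → ℝ) (s' : β → ℝ), (∀ a, s a = 1 ∨ s a = -1) → (∀ b, s' b = 1 ∨ s' b = -1) →
      |∑ a, ∑ b, A a b * (s a * s' b)| ≤ M)
    (u : α → Fin r → ℝ) (v : β → Fin r → ℝ) (hu : ∀ a, ∑ l, u a l ^ 2 ≤ 1)
    (hv : ∀ b, ∑ l, v b l ^ 2 ≤ 1) :
    |∑ a, ∑ b, A a b * ∑ l, u a l * v b l| ≤ 1.783 * M := by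
  have hpi := Real.pi_gt_three
  have hpi' := Real.pi_lt_d4
  obtain ⟨S, hS, hdiag, hSab⟩ := exists_posSemidef_sin_gram u v hu hv
  have hM : 0 ≤ M := (abs_nonneg _).trans (hA 1 1 (by simp) (by simp))
  set P := multivariateGaussian (0 : EuclideanSpace ℝ (α ⊕ β)) S
  have hle : ∀ a b, |∑ l, u a l * v b l| ≤ 1 := fun a b => by
    rw [← sq_le_one_iff_abs_le_one]
    refine (Finset.sum_mul_sq_le_sq_mul_sq _ _ _).trans ?_
    exact mul_le_one₀ (hu a) (Finset.sum_nonneg fun _ _ => sq_nonneg _) (hv b)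
  have hab : ∀ a b, ∫ x, unitSign (x (.inl a)) * unitSign (x (.inr b)) ∂P
      = 2 / Real.pi * (0.881 * ∑ l, u a l * v b l) := fun a b => by
    have := abs_le.1 (hle a b)
    exact integral_multivariateGaussian_unitSign_mul_unitSign hS (hdiag _) (hdiag _)
      ⟨by linarith, by linarith⟩ (hSab a b)
  have hprod : ∀ a b, Integrable (fun x : EuclideanSpace ℝ (α ⊕ β) =>
      A a b * (unitSign (x (.inl a)) * unitSign (x (.inr b)))) P := fun a b => by
    refine Integrable.const_mul (Integrable.of_bound (C := 1)
      (Measurable.aestronglyMeasurable (by fun_prop)) (Filter.Eventually.of_forall fun x => ?_)) _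
    simp [abs_unitSign]
  have hsum : ∫ x, ∑ a, ∑ b, A a b * (unitSign (x (.inl a)) * unitSign (x (.inr b))) ∂P
      = 2 / Real.pi * 0.881 * ∑ a, ∑ b, A a b * ∑ l, u a l * v b l := by
    rw [integral_finsetSum _ fun a _ => integrable_finsetSum _ fun b _ => hprod a b,
      Finset.mul_sum]
    refine Finset.sum_congr rfl fun a _ => ?_
    rw [integral_finsetSum _ fun b _ => hprod a b, Finset.mul_sum]
    refine Finset.sum_congr rfl fun b _ => ?_
    rw [integral_const_mul, hab]
    ring
  have hbound : |∫ x, ∑ a, ∑ b, A a b * (unitSign (x (.inl a)) * unitSign (x (.inr b))) ∂P|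
      ≤ M := by
    have := norm_integral_le_of_norm_le_const (μ := P) (C := M)
      (f := fun x => ∑ a, ∑ b, A a b * (unitSign (x (.inl a)) * unitSign (x (.inr b))))
      (Filter.Eventually.of_forall fun x : EuclideanSpace ℝ (α ⊕ β) =>
        hA (fun a => unitSign (x (.inl a))) (fun b => unitSign (x (.inr b)))
          (fun _ => unitSign_eq_or _) (fun _ => unitSign_eq_or _))
    simpa using this
  rw [hsum, abs_mul, abs_of_pos (by positivity)] at hbound
  set x := |∑ a, ∑ b, A a b * ∑ l, u a l * v b l|
  have hx : 0 ≤ x := abs_nonneg _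
  have hc : 1 ≤ 1.783 * (2 / Real.pi * 0.881) := by
    rw [← sub_nonneg]
    have : 1.783 * (2 / Real.pi * 0.881) - 1 = (1.783 * 2 * 0.881 - Real.pi) / Real.pi := by
      field_simp
    rw [this]
    exact div_nonneg (by linarith) (by linarith)
  nlinarith

lemma sum_div_sq_le_one {r : ℕ} {f : Fin r → ℝ} {R : ℝ} (h : ∑ l, f l ^ 2 ≤ R ^ 2) :
    ∑ l, (f l / R) ^ 2 ≤ 1 := by
  simp only [div_pow, ← Finset.sum_div]
  exact div_le_one_of_le₀ h (sq_nonneg R)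

lemma mul_div_cancel_of_sum_sq_le {r : ℕ} {f : Fin r → ℝ} {R : ℝ} (h : ∑ l, f l ^ 2 ≤ R ^ 2)
    (l : Fin r) : R * (f l / R) = f l := by
  rcases eq_or_ne R 0 with rfl | hR
  · have h0 : f l ^ 2 ≤ 0 := by
      refine (Finset.single_le_sum (f := fun l => f l ^ 2) (fun _ _ => sq_nonneg _)
        (Finset.mem_univ l)).trans (h.trans (by simp))
    simp [pow_eq_zero_iff two_ne_zero |>.1 (le_antisymm h0 (sq_nonneg _))]
  · field_simp

/-- Grothendieck's inequality with Krivine's constant. -/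
lemma grothendieck_inequality {α β : Type*} [Fintype α] [Fintype β] {r : ℕ}
    (A : α → β → ℝ) {M : ℝ}
    (hA : ∀ (s : α → ℝ) (s' : β → ℝ), (∀ a, s a = 1 ∨ s a = -1) → (∀ b, s' b = 1 ∨ s' b = -1) →
      |∑ a, ∑ b, A a b * (s a * s' b)| ≤ M)
    (u : α → Fin r → ℝ) (v : β → Fin r → ℝ) {R R' : ℝ} (hR : 0 ≤ R) (hR' : 0 ≤ R')
    (hu : ∀ a, ∑ l, u a l ^ 2 ≤ R ^ 2) (hv : ∀ b, ∑ l, v b l ^ 2 ≤ R' ^ 2) :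
    |∑ a, ∑ b, A a b * ∑ l, u a l * v b l| ≤ 1.783 * M * (R * R') := by
  have h := grothendieck_inequality_unit A hA (fun a l => u a l / R) (fun b l => v b l / R')
    (fun a => sum_div_sq_le_one (hu a)) (fun b => sum_div_sq_le_one (hv b))
  have heq : ∑ a, ∑ b, A a b * ∑ l, u a l * v b l
      = (∑ a, ∑ b, A a b * ∑ l, (u a l / R) * (v b l / R')) * (R * R') := by
    simp only [Finset.sum_mul, Finset.mul_sum]
    refine Finset.sum_congr rfl fun a _ => Finset.sum_congr rfl fun b _ =>
      Finset.sum_congr rfl fun l _ => ?_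
    have h1 := mul_div_cancel_of_sum_sq_le (hu a) l
    have h2 := mul_div_cancel_of_sum_sq_le (hv b) l
    calc A a b * (u a l * v b l) = A a b * ((R * (u a l / R)) * (R' * (v b l / R'))) := by
          rw [h1, h2]
      _ = A a b * (u a l / R * (v b l / R')) * (R * R') := by ring
  rw [heq, abs_mul, abs_of_nonneg (mul_nonneg hR hR')]
  gcongr

lemma sum_pi_fin_succ {t : ℕ} {κ : Fin (t + 1) → Type*} [∀ i, Fintype (κ i)]
    (f : (∀ i, κ i) → ℝ) :
    ∑ x, f x = ∑ a : κ 0, ∑ y : ∀ i : Fin t, κ i.succ, f (Fin.cons a y) := by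
  rw [← (Fin.consEquiv κ).sum_comp, Fintype.sum_prod_type]
  rfl

lemma sum_rademacher_sq {r : ℕ} (a : Fin r → ℝ) :
    ∑ e : Fin r → ℤˣ, (∑ l, ((e l : ℤ) : ℝ) * a l) ^ 2 = 2 ^ r * ∑ l, a l ^ 2 := by
  induction r with
  | zero => simp
  | succ r ih =>
    rw [sum_pi_fin_succ]
    simp only [Fin.sum_univ_succ, Fin.cons_zero, Fin.cons_succ, UnitsInt.univ]
    rw [Finset.sum_pair (by decide), ← Finset.sum_add_distrib]
    have h : ∀ T : ℝ, (((1 : ℤˣ) : ℤ) * a 0 + T) ^ 2 + (((-1 : ℤˣ) : ℤ) * a 0 + T) ^ 2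
        = 2 * a 0 ^ 2 + 2 * T ^ 2 := fun T => by push_cast; ring
    simp only [h, Finset.sum_add_distrib, ← Finset.mul_sum, ih fun l => a l.succ]
    simp
    ring

lemma sum_rademacher_pow_four_le {r : ℕ} (a : Fin r → ℝ) :
    ∑ e : Fin r → ℤˣ, (∑ l, ((e l : ℤ) : ℝ) * a l) ^ 4 ≤ 2 ^ r * (3 * (∑ l, a l ^ 2) ^ 2) := by
  induction r with
  | zero => simp
  | succ r ih =>
    rw [sum_pi_fin_succ]
    simp only [Fin.sum_univ_succ, Fin.cons_zero, Fin.cons_succ, UnitsInt.univ]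
    rw [Finset.sum_pair (by decide), ← Finset.sum_add_distrib]
    have h : ∀ T : ℝ, (((1 : ℤˣ) : ℤ) * a 0 + T) ^ 4 + (((-1 : ℤˣ) : ℤ) * a 0 + T) ^ 4
        = 2 * a 0 ^ 4 + 12 * a 0 ^ 2 * T ^ 2 + 2 * T ^ 4 := fun T => by push_cast; ring
    simp only [h, Finset.sum_add_distrib, ← Finset.mul_sum,
      sum_rademacher_sq fun l => a l.succ]
    have h4 := ih fun l => a l.succ
    have hpow : (0 : ℝ) ≤ 2 ^ r * a 0 ^ 4 := by positivity
    simp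
    rw [pow_succ (2 : ℝ) r]
    nlinarith

/-- Khintchine's inequality between the first and second moments of a Rademacher sum. -/
lemma khintchine {r : ℕ} (a : Fin r → ℝ) {σ : ℝ} (hσ : 0 ≤ σ) (ha : ∑ l, a l ^ 2 = σ ^ 2) :
    2 ^ r * (9 * σ) ≤ 16 * ∑ e : Fin r → ℤˣ, |∑ l, ((e l : ℤ) : ℝ) * a l| := by
  rcases hσ.eq_or_lt with rfl | hσ
  · simpa using Finset.sum_nonneg fun e _ => abs_nonneg _
  have hpt : ∀ T : ℝ, 12 * σ ^ 2 * T ^ 2 - T ^ 4 ≤ σ ^ 3 * (16 * |T|) := fun T => by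
    have h : 0 ≤ |T| * ((|T| - 2 * σ) ^ 2 * (|T| + 4 * σ)) := by positivity
    have h2 : T ^ 2 = |T| ^ 2 := (sq_abs T).symm
    have h4 : T ^ 4 = |T| ^ 4 := by rw [show T ^ 4 = (T ^ 2) ^ 2 by ring, h2]; ring
    rw [h2, h4]
    nlinarith
  have hsum := Finset.sum_le_sum fun (e : Fin r → ℤˣ) (_ : e ∈ Finset.univ) =>
    hpt (∑ l, ((e l : ℤ) : ℝ) * a l)
  rw [Finset.sum_sub_distrib, ← Finset.mul_sum, ← Finset.mul_sum, ← Finset.mul_sum,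
    sum_rademacher_sq, ha] at hsum
  have h4 := sum_rademacher_pow_four_le a
  rw [ha] at h4
  have : σ ^ 3 * (2 ^ r * (9 * σ))
      ≤ σ ^ 3 * (16 * ∑ e : Fin r → ℤˣ, |∑ l, ((e l : ℤ) : ℝ) * a l|) := by
    nlinarith
  exact le_of_mul_le_mul_left this (by positivity)

/-- Grothendieck's inequality for tensors of order two. -/
lemma bilinear_grothendieck (n : Fin 2 → ℕ) (A : (∀ i, Fin (n i)) → ℝ) (M : ℝ)
    (hA : ∀ s : ∀ i, Fin (n i) → ℝ, (∀ i x, s i x = 1 ∨ s i x = -1) →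
      |∑ x, A x * ∏ i, s i (x i)| ≤ M)
    (r : ℕ) (U : ∀ i, Fin (n i) → Fin r → ℝ) (R : Fin 2 → ℝ) (hR : ∀ i, 0 ≤ R i)
    (hU : ∀ i a, ∑ l, U i a l ^ 2 ≤ R i ^ 2) :
    |∑ x, A x * ∑ l, ∏ i, U i (x i) l| ≤ 1.783 ^ 1 * M * ∏ i, R i := by
  have hsum : ∀ f : (∀ i, Fin (n i)) → ℝ,
      ∑ x, f x = ∑ a, ∑ b, f ((piFinTwoEquiv fun i => Fin (n i)).symm (a, b)) := fun f => by
    rw [← (piFinTwoEquiv fun i => Fin (n i)).symm.sum_comp, Fintype.sum_prod_type]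
  simp only [hsum, Fin.prod_univ_two, pow_one] at hA ⊢
  refine grothendieck_inequality (fun a b => A ((piFinTwoEquiv fun i => Fin (n i)).symm (a, b)))
    (fun s s' hs hs' => ?_) (U 0) (U 1) (hR 0) (hR 1) (hU 0) (hU 1)
  exact hA ((piFinTwoEquiv fun i => Fin (n i) → ℝ).symm (s, s'))
    (Fin.forall_fin_two.2 ⟨hs, hs'⟩)

/-- The multilinear Grothendieck inequality. -/
lemma multilinear_grothendieck (t : ℕ) :
    ∀ (n : Fin (t + 2) → ℕ) (A : (∀ i, Fin (n i)) → ℝ) (M : ℝ),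
    (∀ s : ∀ i, Fin (n i) → ℝ, (∀ i x, s i x = 1 ∨ s i x = -1) →
      |∑ x, A x * ∏ i, s i (x i)| ≤ M) →
    ∀ (r : ℕ) (U : ∀ i, Fin (n i) → Fin r → ℝ) (R : Fin (t + 2) → ℝ), (∀ i, 0 ≤ R i) →
    (∀ i a, ∑ l, U i a l ^ 2 ≤ R i ^ 2) →
    |∑ x, A x * ∑ l, ∏ i, U i (x i) l| ≤ 1.783 ^ (t + 1) * M * ∏ i, R i := by
  induction t with
  | zero => exact bilinear_grothendieck
  | succ t ih =>
    intro n A M hA r U R hR hU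
    let c : Fin (n 0) → Fin r → ℝ := fun a l =>
      ∑ y : ∀ i : Fin (t + 2), Fin (n i.succ), A (Fin.cons a y) * ∏ i, U i.succ (y i) l
    set B : ℝ := 1.783 ^ (t + 1) * M * ∏ i : Fin (t + 2), R i.succ with hB
    have hexpand : ∑ x, A x * ∑ l, ∏ i, U i (x i) l = ∑ a, ∑ l, U 0 a l * c a l := by
      rw [sum_pi_fin_succ]
      refine Finset.sum_congr rfl fun a _ => ?_
      simp only [c, Fin.prod_univ_succ (n := t + 2), Fin.cons_zero, Fin.cons_succ, Finset.mul_sum]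
      rw [Finset.sum_comm]
      refine Finset.sum_congr rfl fun l _ => Finset.sum_congr rfl fun y _ => by ring
    have hsigns : ∀ e : Fin r → ℤˣ, ∑ a, |∑ l, ((e l : ℤ) : ℝ) * c a l| ≤ B := by
      intro e
      let s₀ : Fin (n 0) → ℝ := fun a => unitSign (∑ l, ((e l : ℤ) : ℝ) * c a l)
      let V : ∀ i : Fin (t + 2), Fin (n i.succ) → Fin r → ℝ := fun i a l =>
        (if i = 0 then ((e l : ℤ) : ℝ) else 1) * U i.succ a l
      have hV : ∀ (y : ∀ i : Fin (t + 2), Fin (n i.succ)) l,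
          ∏ i, V i (y i) l = ((e l : ℤ) : ℝ) * ∏ i, U i.succ (y i) l := fun y l => by
        simp only [V, Finset.prod_mul_distrib]
        simp
      have h := ih (fun i => n i.succ) (fun y => ∑ a, s₀ a * A (Fin.cons a y)) M
        (fun s hs => ?_) r V (fun i => R i.succ) (fun i => hR _) (fun i a => ?_)
      · refine le_trans (le_of_eq ?_) ((le_abs_self _).trans h)
        simp only [hV, ← unitSign_mul_self, Finset.sum_mul]
        rw [Finset.sum_comm]
        refine Finset.sum_congr rfl fun a _ => ?_
        simp only [c, Finset.mul_sum]
        rw [Finset.sum_comm]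
        refine Finset.sum_congr rfl fun y _ => Finset.sum_congr rfl fun l _ => ?_
        simp only [s₀, c, Finset.mul_sum]
        ring
      · have h := hA (Fin.cons (α := fun i => Fin (n i) → ℝ) s₀ s) (Fin.cases
          (fun a => unitSign_eq_or _) fun i a => hs i a)
        convert h using 2
        symm
        rw [sum_pi_fin_succ, Finset.sum_comm]
        simp only [Finset.sum_mul]
        refine Finset.sum_congr rfl fun y _ => Finset.sum_congr rfl fun a _ => ?_
        simp only [Fin.prod_univ_succ (n := t + 2), Fin.cons_zero, Fin.cons_succ]
        ring
      · refine le_trans (le_of_eq (Finset.sum_congr rfl fun l _ => ?_)) (hU i.succ a)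
        have he : ((e l : ℤ) : ℝ) ^ 2 = 1 := by
          rcases Int.units_eq_one_or (e l) with h | h <;> simp [h]
        simp only [V]
        split_ifs <;> simp [mul_pow, he]
    have hrow : ∀ a, |∑ l, U 0 a l * c a l| ≤ R 0 * √(∑ l, c a l ^ 2) := fun a => by
      refine Real.abs_le_sqrt (Finset.sum_mul_sq_le_sq_mul_sq _ _ _) |>.trans ?_
      rw [Real.sqrt_mul (Finset.sum_nonneg fun _ _ => sq_nonneg _)]
      gcongr
      exact Real.sqrt_le_iff.2 ⟨hR 0, hU 0 a⟩
    have hkh : 2 ^ r * (9 * ∑ a, √(∑ l, c a l ^ 2)) ≤ 2 ^ r * (16 * B) := by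
      calc 2 ^ r * (9 * ∑ a, √(∑ l, c a l ^ 2))
          = ∑ a, 2 ^ r * (9 * √(∑ l, c a l ^ 2)) := by simp only [Finset.mul_sum]
        _ ≤ ∑ a, 16 * ∑ e : Fin r → ℤˣ, |∑ l, ((e l : ℤ) : ℝ) * c a l| :=
          Finset.sum_le_sum fun a _ => khintchine _ (Real.sqrt_nonneg _)
            (Real.sq_sqrt (Finset.sum_nonneg fun _ _ => sq_nonneg _)).symm
        _ = 16 * ∑ e : Fin r → ℤˣ, ∑ a, |∑ l, ((e l : ℤ) : ℝ) * c a l| := by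
          rw [← Finset.mul_sum, Finset.sum_comm]
        _ ≤ 16 * ∑ e : Fin r → ℤˣ, B := by gcongr with e; exact hsigns e
        _ = 2 ^ r * (16 * B) := by simp; ring
    have hkh' := le_of_mul_le_mul_left hkh (by positivity)
    have hnn : 0 ≤ ∑ a, √(∑ l, c a l ^ 2) := Finset.sum_nonneg fun _ _ => Real.sqrt_nonneg _
    calc |∑ x, A x * ∑ l, ∏ i, U i (x i) l| ≤ ∑ a, R 0 * √(∑ l, c a l ^ 2) := by
          rw [hexpand]
          exact (Finset.abs_sum_le_sum_abs _ _).trans (Finset.sum_le_sum fun a _ => hrow a)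
      _ = R 0 * ∑ a, √(∑ l, c a l ^ 2) := (Finset.mul_sum _ _ _).symm
      _ ≤ R 0 * (1.783 * B) := mul_le_mul_of_nonneg_left (by linarith) (hR 0)
      _ = 1.783 ^ (t + 1 + 1) * M * ∏ i, R i := by
          rw [Fin.prod_univ_succ (n := t + 2), hB]
          ring

/-- The rank-one sign tensors. -/
def signTensors {t : ℕ} (n : Fin t → ℕ) : Set ((∀ i, Fin (n i)) → ℝ) :=
  {S | ∃ s : ∀ i, Fin (n i) → ℝ, (∀ i x, s i x = 1 ∨ s i x = -1) ∧ S = fun x => ∏ i, s i (x i)}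

lemma finite_signTensors {t : ℕ} (n : Fin t → ℕ) : (signTensors n).Finite := by
  have hfin : (Set.pi Set.univ fun i : Fin t => Set.pi Set.univ fun _ : Fin (n i) =>
      ({1, -1} : Set ℝ)).Finite :=
    Set.Finite.pi fun i => Set.Finite.pi fun _ => Set.toFinite _
  refine (hfin.image fun s x => ∏ i, s i (x i)).subset ?_
  rintro _ ⟨s, hs, rfl⟩
  exact ⟨s, fun i _ x _ => hs i x, rfl⟩

lemma neg_mem_signTensors {t : ℕ} (ht : 0 < t) {n : Fin t → ℕ} {S : (∀ i, Fin (n i)) → ℝ}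
    (hS : S ∈ signTensors n) : -S ∈ signTensors n := by
  obtain ⟨s, hs, rfl⟩ := hS
  refine ⟨fun i x => (if i = ⟨0, ht⟩ then -1 else 1) * s i x, fun i x => ?_, ?_⟩
  · dsimp only
    split_ifs <;> rcases hs i x with h | h <;> simp [h]
  · ext x
    rw [Finset.prod_mul_distrib]
    simp

lemma signNuclearNorm_le_of_mem_convexHull {t : ℕ} {n : Fin t → ℕ} {T : (∀ i, Fin (n i)) → ℝ}
    {C : ℝ} (hC : 0 < C) (hT : C⁻¹ • T ∈ convexHull ℝ (signTensors n)) :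
    signNuclearNorm T ≤ C := by
  obtain ⟨ι, hι, w, z, hw0, hw1, hz, hsum⟩ := mem_convexHull_iff_exists_fintype.1 hT
  choose s hs hzs using hz
  let e := Fintype.equivFin ι
  refine csInf_le ⟨0, ?_⟩ ⟨Fintype.card ι, fun j => C * w (e.symm j), fun j => s (e.symm j),
    fun j => hs _, fun x => ?_, ?_⟩
  · rintro _ ⟨r, a, -, -, -, rfl⟩
    exact Finset.sum_nonneg fun _ _ => abs_nonneg _
  · have h := congrFun hsum x
    rw [e.symm.sum_comp fun i => C * w i * ∏ k, s i k (x k)]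
    simp only [Finset.sum_apply, Pi.smul_apply, smul_eq_mul] at h
    calc T x = C * (C⁻¹ * T x) := by field_simp
      _ = ∑ i, C * w i * ∏ k, s i k (x k) := by
        rw [← h, Finset.mul_sum]
        exact Finset.sum_congr rfl fun i _ => by rw [hzs i]; ring
  · rw [e.symm.sum_comp fun i => |C * w i|]
    simp only [abs_mul, abs_of_pos hC, fun i => abs_of_nonneg (hw0 i), ← Finset.mul_sum, hw1,
      mul_one]

/-- The sign nuclear norm is bounded through its dual norm. -/
lemma signNuclearNorm_le_of_forall_dual {t : ℕ} (ht : 0 < t) {n : Fin t → ℕ}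
    {T : (∀ i, Fin (n i)) → ℝ} {C : ℝ} (hC : 0 ≤ C)
    (h : ∀ (A : (∀ i, Fin (n i)) → ℝ) (M : ℝ),
      (∀ s : ∀ i, Fin (n i) → ℝ, (∀ i x, s i x = 1 ∨ s i x = -1) →
        |∑ x, A x * ∏ i, s i (x i)| ≤ M) → |∑ x, A x * T x| ≤ C * M) :
    signNuclearNorm T ≤ C := by
  refine le_of_forall_pos_le_add fun ε hε => ?_
  have hpos : 0 < C + ε := by linarith
  refine signNuclearNorm_le_of_mem_convexHull hpos ?_
  by_contra hT
  obtain ⟨f, u, hfu, hu⟩ := geometric_hahn_banach_closed_point (convex_convexHull ℝ _)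
    ((finite_signTensors n).isCompact_convexHull ℝ).isClosed hT
  let A : (∀ i, Fin (n i)) → ℝ := fun x => f (Pi.single x 1)
  have hf : ∀ S, f S = ∑ x, A x * S x := fun S => by
    conv_lhs => rw [← Finset.univ_sum_single S]
    rw [map_sum]
    refine Finset.sum_congr rfl fun x _ => ?_
    have : Pi.single x (S x) = S x • (Pi.single x 1 : (∀ i, Fin (n i)) → ℝ) := by
      rw [← Pi.single_smul, smul_eq_mul, mul_one]
    rw [this, map_smul, smul_eq_mul, mul_comm]
  have hS : ∀ s : ∀ i, Fin (n i) → ℝ, (∀ i x, s i x = 1 ∨ s i x = -1) →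
      |∑ x, A x * ∏ i, s i (x i)| ≤ u := fun s hs => by
    have hmem : (fun x => ∏ i, s i (x i)) ∈ signTensors n := ⟨s, hs, rfl⟩
    have h1 := hfu _ (subset_convexHull ℝ _ hmem)
    have h2 := hfu _ (subset_convexHull ℝ _ (neg_mem_signTensors ht hmem))
    rw [map_neg] at h2
    rw [hf] at h1 h2
    exact abs_le.2 ⟨by linarith, h1.le⟩
  have hu0 : 0 ≤ u := (abs_nonneg _).trans (hS (fun _ _ => 1) (by simp))
  have hle := (le_abs_self _).trans (h A u hS)
  rw [map_smul, smul_eq_mul, hf, ← div_eq_inv_mul, lt_div_iff₀ hpos] at hu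
  nlinarith

lemma rowTwoInf_nonneg {α : Type*} {r : ℕ} (U : α → Fin r → ℝ) : 0 ≤ rowTwoInf U :=
  Real.iSup_nonneg fun _ => Real.sqrt_nonneg _

lemma sum_sq_le_rowTwoInf_sq {α : Type*} [Finite α] {r : ℕ} (U : α → Fin r → ℝ) (a : α) :
    ∑ l, U a l ^ 2 ≤ rowTwoInf U ^ 2 := by
  have h : √(∑ l, U a l ^ 2) ≤ rowTwoInf U :=
    le_ciSup (f := fun a => √(∑ l, U a l ^ 2)) (Set.finite_range _).bddAbove a
  exact (Real.sqrt_le_left (rowTwoInf_nonneg U)).1 h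

lemma exists_rank_factorization {t : ℕ} (ht : 0 < t) {n : Fin t → ℕ}
    (T : (∀ i, Fin (n i)) → ℝ) :
    ∃ (r : ℕ) (U : ∀ i, Fin (n i) → Fin r → ℝ), ∀ x, T x = ∑ l, ∏ i, U i (x i) l := by
  let e := Fintype.equivFin (∀ i, Fin (n i))
  refine ⟨_, fun i a l => (if i = ⟨0, ht⟩ then T (e.symm l) else 1) *
    if a = e.symm l i then 1 else 0, fun x => ?_⟩
  rw [e.symm.sum_comp fun y => ∏ i, (if i = (⟨0, ht⟩ : Fin t) then T y else 1) *
    if x i = y i then (1 : ℝ) else 0]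
  simp only [Finset.prod_mul_distrib, Finset.prod_ite_eq', Finset.mem_univ, if_true,
    Fintype.prod_boole, ← funext_iff]
  simp

/-- Multilinear Grothendieck bound relating the sign nuclear norm and the
max-quasinorm: `‖T‖_± ≤ K_G^{t−1}·‖T‖_max ≤ 1.783^{t−1}·‖T‖_max`. -/
theorem signNuclearNorm_le_maxQnorm (t : ℕ) (ht : 2 ≤ t) (n : Fin t → ℕ)
    (T : ((i : Fin t) → Fin (n i)) → ℝ) :
    signNuclearNorm T ≤ 1.783 ^ (t - 1) * maxQnorm T := by
  obtain ⟨t, rfl⟩ := Nat.exists_eq_add_of_le' ht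
  have hK : (0 : ℝ) < 1.783 ^ (t + 2 - 1) := by positivity
  rw [← div_le_iff₀' hK]
  obtain ⟨r₀, U₀, hU₀⟩ := exists_rank_factorization (Nat.succ_pos _) T
  refine le_csInf ⟨_, r₀, U₀, hU₀, rfl⟩ ?_
  rintro _ ⟨r, U, hTU, rfl⟩
  rw [div_le_iff₀' hK]
  refine signNuclearNorm_le_of_forall_dual (Nat.succ_pos _)
    (mul_nonneg hK.le (Finset.prod_nonneg fun i _ => rowTwoInf_nonneg _)) fun A M hA => ?_
  have h := multilinear_grothendieck t n A M hA r U (fun i => rowTwoInf (U i))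
    (fun i => rowTwoInf_nonneg _) (fun i a => sum_sq_le_rowTwoInf_sq _ a)
  simp only [hTU]
  exact h.trans (le_of_eq (by rw [show t + 2 - 1 = t + 1 from rfl]; ring))
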